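/- For all positive integers x, y, m, n with x > y, if φ((x^m − y^m)/(x − y)) = (x^n − y^n)/(x − y), then m = 1 and n = 1. -/

import Mathlib

def qq (x y m : ℕ) : ℕ := (x ^ m - y ^ m) / (x - y)

lemma qq_spec (x y m : ℕ) : (x - y) * qq x y m = x ^ m - y ^ m :=
  Nat.mul_div_cancel' (Nat.sub_dvd_pow_sub_pow x y m)

lemma qq_pos {x y m : ℕ} (hxy : y < x) (hm : 0 < m) : 0 < qq x y m := by
  have h1 := qq_spec x y m
  have h2 : y ^ m < x ^ m := Nat.pow_lt_pow_left hxy hm.ne'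
  rcases Nat.eq_zero_or_pos (qq x y m) with h | h
  · rw [h] at h1; omega
  · exact h

lemma qq_dvd {x y d m : ℕ} (hxy : y < x) (h : d ∣ m) : qq x y d ∣ qq x y m := by
  obtain ⟨c, rfl⟩ := h
  have : x ^ d - y ^ d ∣ x ^ (d * c) - y ^ (d * c) := by
    rw [pow_mul, pow_mul]; exact Nat.sub_dvd_pow_sub_pow _ _ _
  rw [← qq_spec, ← qq_spec] at this
  exact Nat.dvd_of_mul_dvd_mul_left (by omega) this

lemma dvd_of_dvd_qq {p x y m : ℕ} (h : p ∣ qq x y m) : p ∣ x ^ m - y ^ m := by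
  rw [← qq_spec]; exact h.mul_left _

lemma not_dvd_left {p x y m : ℕ} (hp : p.Prime) (hxy : y < x) (hc : x.Coprime y) (hm : 0 < m)
    (h : p ∣ x ^ m - y ^ m) : ¬ p ∣ x := by
  intro hx
  have hle : y ^ m ≤ x ^ m := Nat.pow_le_pow_left hxy.le _
  have h2 : p ∣ y ^ m := (Nat.dvd_sub_iff_right hle (dvd_pow hx hm.ne')).1 h
  have h3 := hp.dvd_of_dvd_pow h2
  exact hp.one_lt.ne' (Nat.dvd_one.1 (hc ▸ Nat.dvd_gcd hx h3))

lemma not_dvd_right {p x y m : ℕ} (hp : p.Prime) (hxy : y < x) (hc : x.Coprime y) (hm : 0 < m)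
    (h : p ∣ x ^ m - y ^ m) : ¬ p ∣ y := by
  intro hx
  have hle : y ^ m ≤ x ^ m := Nat.pow_le_pow_left hxy.le _
  have h2 : p ∣ x ^ m := (Nat.dvd_sub_iff_left hle (dvd_pow hx hm.ne')).1 h
  have h3 := hp.dvd_of_dvd_pow h2
  exact hp.one_lt.ne' (Nat.dvd_one.1 (hc ▸ Nat.dvd_gcd h3 hx))

lemma dvd_iff_pow {p x y : ℕ} [Fact p.Prime] (hxy : y < x) (hy : ¬ p ∣ y) (r : ℕ) :
    p ∣ x ^ r - y ^ r ↔ ((x : ZMod p) / y) ^ r = 1 := by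
  have hle : y ^ r ≤ x ^ r := Nat.pow_le_pow_left hxy.le _
  have hy0 : (y : ZMod p) ≠ 0 := by rwa [Ne, ZMod.natCast_eq_zero_iff]
  rw [← ZMod.natCast_eq_zero_iff, Nat.cast_sub hle, div_pow, div_eq_one_iff_eq (pow_ne_zero _ hy0),
    sub_eq_zero]
  push_cast; rfl

lemma dvd_qq_iff {p x y m : ℕ} (hp : p.Prime) (hxy : y < x) (hy : ¬ p ∣ y) (h : p ∣ x - y) :
    p ∣ qq x y m ↔ p ∣ m := by
  have := Fact.mk hp
  have hy0 : (y : ZMod p) ≠ 0 := by rwa [Ne, ZMod.natCast_eq_zero_iff]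
  have e : (qq x y m : ℤ) = ∑ i ∈ Finset.range m, (x : ℤ) ^ i * (y : ℤ) ^ (m - 1 - i) := by
    have h1 := geom_sum₂_mul (x : ℤ) (y : ℤ) m
    have h2 := qq_spec x y m
    have hle : y ^ m ≤ x ^ m := Nat.pow_le_pow_left hxy.le _
    zify [hxy.le, hle] at h2
    have h3 : (x : ℤ) - y ≠ 0 := by omega
    apply mul_left_cancel₀ h3
    rw [h2, ← h1, mul_comm]
  have hxy' : (x : ZMod p) = y := by
    rw [← ZMod.natCast_eq_zero_iff, Nat.cast_sub hxy.le, sub_eq_zero] at h; exact h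
  have e2 : (qq x y m : ZMod p) = m * (y : ZMod p) ^ (m - 1) := by
    have := congrArg (Int.cast : ℤ → ZMod p) e
    push_cast at this
    rw [this, hxy']
    rw [Finset.sum_congr rfl (g := fun _ => (y : ZMod p) ^ (m - 1))]
    · simp
    · intro i hi
      rw [← pow_add]; congr 1
      have := Finset.mem_range.1 hi; omega
  rw [← ZMod.natCast_eq_zero_iff, e2, ← ZMod.natCast_eq_zero_iff]
  simp [hy0]

lemma totient_val {q N : ℕ} (hq : q.Prime) (P : Finset ℕ)
    (hP : ∀ p ∈ P, p.Prime ∧ p ∣ N ∧ q ∣ p - 1) :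
    q ^ (padicValNat q N - 1 + P.card) ∣ N.totient := by
  have hcop : ∀ p ∈ P, p ≠ q := by
    rintro p hp rfl
    obtain ⟨h1, -, h3⟩ := hP p hp
    have := Nat.le_of_dvd (by have := h1.two_le; omega) h3
    have := h1.two_le; omega
  have hc : (q ^ padicValNat q N).Coprime (∏ p ∈ P, p) := by
    apply Nat.Coprime.pow_left
    apply Nat.Coprime.prod_right
    intro p hp
    exact (Nat.coprime_primes hq (hP p hp).1).2 (hcop p hp).symm
  have hprod : ∏ p ∈ P, p ∣ N := by
    apply Finset.prod_primes_dvd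
    · intro p hp; exact (hP p hp).1.prime
    · intro p hp; exact (hP p hp).2.1
  have hD : q ^ padicValNat q N * ∏ p ∈ P, p ∣ N :=
    Nat.Coprime.mul_dvd_of_dvd_of_dvd hc pow_padicValNat_dvd hprod
  refine dvd_trans ?_ (Nat.totient_dvd_of_dvd hD)
  rw [Nat.totient_mul hc, pow_add]
  apply mul_dvd_mul
  · rcases Nat.eq_zero_or_pos (padicValNat q N) with h | h
    · simp [h]
    · rw [Nat.totient_prime_pow hq h]; exact dvd_mul_right _ _
  · have : ∀ S : Finset ℕ, S ⊆ P → q ^ S.card ∣ (∏ p ∈ S, p).totient := by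
      intro S
      induction S using Finset.induction_on with
      | empty => simp
      | insert a s ha ih =>
        intro hs
        have haP : a ∈ P := hs (Finset.mem_insert_self _ _)
        have hsP : s ⊆ P := fun t ht => hs (Finset.mem_insert_of_mem ht)
        rw [Finset.prod_insert ha, Finset.card_insert_of_notMem ha, Nat.totient_mul, pow_succ,
          mul_comm, Nat.totient_prime (hP a haP).1]
        · exact mul_dvd_mul (hP a haP).2.2 (ih hsP)
        · apply Nat.Coprime.prod_right
          intro p hp
          refine (Nat.coprime_primes (hP a haP).1 (hP p (hsP hp)).1).2 ?_
          rintro rfl; exact ha hp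
    exact this P subset_rfl

lemma val_lemma {q x y m n : ℕ} (hq : q.Prime) (hxy : y < x) (hc : x.Coprime y)
    (hx2 : ¬ 2 ∣ x) (hy2 : ¬ 2 ∣ y) (hm : 0 < m) (hn : 0 < n)
    (h1 : q ∣ qq x y m) (h2 : q ∣ qq x y n) :
    padicValNat q (qq x y m) + padicValNat q n = padicValNat q (qq x y n) + padicValNat q m := by
  have := Fact.mk hq
  have hqx := not_dvd_left hq hxy hc hm (dvd_of_dvd_qq h1)
  have hqy := not_dvd_right hq hxy hc hm (dvd_of_dvd_qq h1)
  have em := congrArg (padicValNat q) (qq_spec x y m)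
  have en := congrArg (padicValNat q) (qq_spec x y n)
  have hxy0 : x - y ≠ 0 := by omega
  rw [padicValNat.mul hxy0 (qq_pos hxy hm).ne'] at em
  rw [padicValNat.mul hxy0 (qq_pos hxy hn).ne'] at en
  rcases hq.eq_two_or_odd' with rfl | hodd
  · have hd : 2 ∣ x - y := by omega
    have e1 := padicValNat.pow_two_sub_pow hxy hd hqx hm.ne'
      (even_iff_two_dvd.2 ((dvd_qq_iff hq hxy hqy hd).1 h1))
    have e2 := padicValNat.pow_two_sub_pow hxy hd hqx hn.ne'
      (even_iff_two_dvd.2 ((dvd_qq_iff hq hxy hqy hd).1 h2))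
    omega
  · set d := Nat.gcd m n with hdd
    have hd0 : 0 < d := Nat.gcd_pos_of_pos_left _ hm
    have hd : q ∣ x ^ d - y ^ d := by
      have a1 := (dvd_iff_pow hxy hqy m).1 (dvd_of_dvd_qq h1)
      have a2 := (dvd_iff_pow hxy hqy n).1 (dvd_of_dvd_qq h2)
      rw [dvd_iff_pow hxy hqy]
      rw [← orderOf_dvd_iff_pow_eq_one] at a1 a2 ⊢
      exact Nat.dvd_gcd a1 a2
    have hlt : y ^ d < x ^ d := Nat.pow_lt_pow_left hxy hd0.ne'
    have hqxd : ¬ q ∣ x ^ d := fun h => hqx (hq.dvd_of_dvd_pow h)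
    obtain ⟨a, ha⟩ : d ∣ m := Nat.gcd_dvd_left _ _
    obtain ⟨b, hb⟩ : d ∣ n := Nat.gcd_dvd_right _ _
    have ha0 : a ≠ 0 := by rintro rfl; omega
    have hb0 : b ≠ 0 := by rintro rfl; omega
    have e1 := padicValNat.pow_sub_pow hodd hlt hd hqxd ha0
    have e2 := padicValNat.pow_sub_pow hodd hlt hd hqxd hb0
    rw [← pow_mul, ← pow_mul, ← ha] at e1
    rw [← pow_mul, ← pow_mul, ← hb] at e2
    have f1 : padicValNat q m = padicValNat q d + padicValNat q a := by
      rw [ha, padicValNat.mul hd0.ne' ha0]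
    have f2 : padicValNat q n = padicValNat q d + padicValNat q b := by
      rw [hb, padicValNat.mul hd0.ne' hb0]
    omega

lemma zsig {x y e : ℕ} (hy : 0 < y) (hxy : y < x) (hc : x.Coprime y) (he : 2 ≤ e)
    (hne : ∀ p, p.Prime → p ∣ qq x y e → ¬ p ∣ e) :
    ∃ p, p.Prime ∧ p ∣ qq x y e ∧ e ∣ p - 1 ∧ ∀ r, p ∣ x ^ r - y ^ r ↔ e ∣ r := by
  set F : ℤ := ((Polynomial.cyclotomic e ℤ).scaleRoots (y : ℤ)).eval (x : ℤ) with hF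
  have hyR : (0 : ℝ) < y := by exact_mod_cast hy
  have hFR : (F : ℝ) = (y : ℝ) ^ (Nat.totient e) * (Polynomial.cyclotomic e ℝ).eval ((x : ℝ) / y) := by
    have h1 := Polynomial.scaleRoots_eval₂_mul (p := Polynomial.cyclotomic e ℤ) (Int.castRingHom ℝ)
      ((x : ℝ) / y) (y : ℤ)
    have h2 : (Int.castRingHom ℝ) (y : ℤ) * ((x : ℝ) / y) = (Int.castRingHom ℝ) (x : ℤ) := by
      simp; field_simp
    rw [h2, Polynomial.eval₂_at_apply, Polynomial.eval₂_eq_eval_map, Polynomial.map_cyclotomic,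
      Polynomial.natDegree_cyclotomic] at h1
    simpa using h1
  have hF1 : 1 < F := by
    have h1 : (1 : ℝ) < (x : ℝ) / y := by
      rw [lt_div_iff₀ hyR]; simpa using hxy
    have h2 := Polynomial.sub_one_pow_totient_lt_cyclotomic_eval he h1
    have h3 : (1 : ℝ) ≤ (y : ℝ) ^ (Nat.totient e) * ((x : ℝ) / y - 1) ^ (Nat.totient e) := by
      rw [← mul_pow]
      apply one_le_pow₀
      have : (y : ℝ) * ((x : ℝ) / y - 1) = x - y := by field_simp
      rw [this]
      have : (y : ℝ) + 1 ≤ x := by exact_mod_cast hxy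
      linarith
    have h4 : (1 : ℝ) < F := by
      rw [hFR]
      exact h3.trans_lt (mul_lt_mul_of_pos_left h2 (by positivity))
    exact_mod_cast h4
  obtain ⟨p, hp, hpF⟩ := Nat.exists_prime_and_dvd (n := F.natAbs) (by omega)
  have := Fact.mk hp
  have hpF' : ((F : ℤ) : ZMod p) = 0 := by
    rw [ZMod.intCast_zmod_eq_zero_iff_dvd]
    exact Int.natCast_dvd.2 hpF
  have hev : Polynomial.eval₂ (Int.castRingHom (ZMod p)) (x : ZMod p)
      ((Polynomial.cyclotomic e ℤ).scaleRoots (y : ℤ)) = 0 := by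
    have h := Polynomial.eval₂_at_apply (p := (Polynomial.cyclotomic e ℤ).scaleRoots (y : ℤ))
      (Int.castRingHom (ZMod p)) (x : ℤ)
    rw [← hF] at h
    simpa [hpF'] using h
  have hpy : ¬ p ∣ y := by
    intro hpy
    have hy0 : (y : ZMod p) = 0 := by rwa [ZMod.natCast_eq_zero_iff]
    rw [Polynomial.eval₂_eq_eval_map, Polynomial.map_scaleRoots _ _ _ (by
      rw [(Polynomial.cyclotomic.monic e ℤ).leadingCoeff]; simp)] at hev
    simp only [Polynomial.map_cyclotomic, eq_intCast, Int.cast_natCast, hy0,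
      Polynomial.scaleRoots_zero, (Polynomial.cyclotomic.monic e (ZMod p)).leadingCoeff, one_smul,
      Polynomial.eval_pow, Polynomial.eval_X] at hev
    have hx0 := eq_zero_of_pow_eq_zero hev
    rw [ZMod.natCast_eq_zero_iff] at hx0
    exact hp.one_lt.ne' (Nat.dvd_one.1 (hc ▸ Nat.dvd_gcd hx0 hpy))
  have hy0 : (y : ZMod p) ≠ 0 := by rwa [Ne, ZMod.natCast_eq_zero_iff]
  have hroot : (Polynomial.cyclotomic e (ZMod p)).IsRoot ((x : ZMod p) / y) := by
    have h1 := Polynomial.scaleRoots_eval₂_mul (p := Polynomial.cyclotomic e ℤ)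
      (Int.castRingHom (ZMod p)) ((x : ZMod p) / y) (y : ℤ)
    have h2 : (Int.castRingHom (ZMod p)) (y : ℤ) * ((x : ZMod p) / y) = (x : ZMod p) := by
      simp; field_simp
    rw [h2, hev, Polynomial.eval₂_eq_eval_map, Polynomial.map_cyclotomic] at h1
    rcases mul_eq_zero.1 h1.symm with h | h
    · exact absurd (eq_zero_of_pow_eq_zero h) (by simpa using hy0)
    · exact h
  have hdv : p ∣ x ^ e - y ^ e := by
    rw [dvd_iff_pow hxy hpy]
    have h := hroot.dvd (Polynomial.cyclotomic.dvd_X_pow_sub_one e (ZMod p))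
    simpa [sub_eq_zero] using h
  have hqe : p ∣ e → p ∣ qq x y e := by
    intro h
    by_cases hd : p ∣ x - y
    · exact (dvd_qq_iff hp hxy hpy hd).2 h
    · rw [← qq_spec] at hdv
      exact (hp.dvd_mul.1 hdv).resolve_left hd
  have hpe : ¬ p ∣ e := fun h => hne p hp (hqe h) h
  have : NeZero (e : ZMod p) := ⟨by rwa [Ne, ZMod.natCast_eq_zero_iff]⟩
  have hprim := Polynomial.isRoot_cyclotomic_iff.1 hroot
  have hord := hprim.eq_orderOf
  have hiff : ∀ r, p ∣ x ^ r - y ^ r ↔ e ∣ r := by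
    intro r
    rw [dvd_iff_pow hxy hpy, ← orderOf_dvd_iff_pow_eq_one, ← hord]
  have hpx := not_dvd_left hp hxy hc (by omega) hdv
  refine ⟨p, hp, ?_, ?_, hiff⟩
  swap
  · rw [← hiff, dvd_iff_pow hxy hpy]
    apply ZMod.pow_card_sub_one_eq_one
    apply div_ne_zero <;> rwa [Ne, ZMod.natCast_eq_zero_iff]
  rw [← qq_spec] at hdv
  refine (hp.dvd_mul.1 hdv).resolve_left fun hd => ?_
  have := (dvd_iff_pow hxy hpy 1).1 (by simpa using hd)
  rw [pow_one] at this
  rw [this, orderOf_one] at hord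
  omega

lemma A_bound {q x y m n A : ℕ} (hq : q.Prime) (hodd : Odd q) (hxy : y < x) (hc : x.Coprime y)
    (hx2 : ¬ 2 ∣ x) (hy2 : ¬ 2 ∣ y) (hx3 : 3 ≤ x) (hn : 0 < n) (hnm : n < m)
    (hv : padicValNat q n < padicValNat q m) (hA : q ^ A ∣ x ^ n - y ^ n) :
    q ^ A ≤ (x ^ (m - n)) ^ ((q - 1) / 2) := by
  have := Fact.mk hq
  rcases Nat.eq_zero_or_pos A with rfl | hA0
  · simpa using Nat.one_le_pow _ _ (by positivity)
  have hqd : q ∣ x ^ n - y ^ n := (dvd_pow_self q hA0.ne').trans hA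
  have hqx := not_dvd_left hq hxy hc hn hqd
  have hqy := not_dvd_right hq hxy hc hn hqd
  obtain ⟨h, hh⟩ := hodd
  have hq2 := hq.two_le
  have hh1 : 1 ≤ h := by omega
  have hq1 : q - 1 = 2 * h := by omega
  have hhh : (q - 1) / 2 = h := by omega
  rw [hhh]
  have hlt : y ^ (q - 1) < x ^ (q - 1) := Nat.pow_lt_pow_left hxy (by omega)
  have hferm : q ∣ x ^ (q - 1) - y ^ (q - 1) := by
    rw [dvd_iff_pow hxy hqy]
    apply ZMod.pow_card_sub_one_eq_one
    apply div_ne_zero <;> rwa [Ne, ZMod.natCast_eq_zero_iff]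
  have hlte := padicValNat.pow_sub_pow ⟨h, hh⟩ hlt hferm (fun hd => hqx (hq.dvd_of_dvd_pow hd)) hn.ne'
  have hdiv : q ^ A ∣ (x ^ (q - 1)) ^ n - (y ^ (q - 1)) ^ n := by
    refine hA.trans ?_
    rw [← pow_mul, ← pow_mul, mul_comm, pow_mul, pow_mul]
    exact Nat.sub_dvd_pow_sub_pow _ _ _
  have hlt2 : (y ^ (q - 1)) ^ n < (x ^ (q - 1)) ^ n := Nat.pow_lt_pow_left hlt hn.ne'
  have hAle : A ≤ padicValNat q (x ^ (q - 1) - y ^ (q - 1)) + padicValNat q n := by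
    rw [← hlte]
    exact (padicValNat_dvd_iff_le (by omega)).1 hdiv
  set v := padicValNat q (x ^ (q - 1) - y ^ (q - 1)) with hvdef
  have hvd : q ^ v ∣ x ^ (q - 1) - y ^ (q - 1) := pow_padicValNat_dvd
  have hqv : q ^ v ≤ x ^ h := by
    have hlth : y ^ h < x ^ h := Nat.pow_lt_pow_left hxy (by omega)
    have e : x ^ (q - 1) - y ^ (q - 1) = (x ^ h + y ^ h) * (x ^ h - y ^ h) := by
      rw [hq1, mul_comm, pow_mul, pow_mul, Nat.sq_sub_sq]
    rw [e] at hvd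
    by_cases hd : q ∣ x ^ h - y ^ h
    · have hnd : ¬ q ∣ x ^ h + y ^ h := by
        intro hd2
        have : q ∣ 2 * x ^ h := by
          have := dvd_add hd hd2
          have e2 : x ^ h - y ^ h + (x ^ h + y ^ h) = 2 * x ^ h := by omega
          rwa [e2] at this
        rcases hq.dvd_mul.1 this with h' | h'
        · have := Nat.le_of_dvd (by norm_num) h'; omega
        · exact hqx (hq.dvd_of_dvd_pow h')
      have hcop : (q ^ v).Coprime (x ^ h + y ^ h) := ((hq.coprime_iff_not_dvd).2 hnd).pow_left _
      have := Nat.le_of_dvd (by omega) (hcop.dvd_of_dvd_mul_left hvd)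
      omega
    · have hcop : (q ^ v).Coprime (x ^ h - y ^ h) := ((hq.coprime_iff_not_dvd).2 hd).pow_left _
      have h1 := hcop.dvd_of_dvd_mul_right hvd
      have h2 : 2 ∣ x ^ h + y ^ h := by
        have a1 : Odd (x ^ h) := Odd.pow (by rw [← Nat.not_even_iff_odd, even_iff_two_dvd]; exact hx2)
        have a2 : Odd (y ^ h) := Odd.pow (by rw [← Nat.not_even_iff_odd, even_iff_two_dvd]; exact hy2)
        exact even_iff_two_dvd.1 (a1.add_odd a2)
      have h3 : (q ^ v).Coprime 2 := by
        apply Nat.Coprime.pow_left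
        rw [Nat.coprime_primes hq Nat.prime_two]; omega
      have := Nat.le_of_dvd (by omega) (h3.mul_dvd_of_dvd_of_dvd h1 h2)
      omega
  have hk : q ^ padicValNat q n ≤ m - n := by
    apply Nat.le_of_dvd (by omega)
    apply Nat.dvd_sub
    · exact (pow_dvd_pow q hv.le).trans pow_padicValNat_dvd
    · exact pow_padicValNat_dvd
  obtain ⟨k, hk'⟩ : ∃ k, m - n = k + 1 := ⟨m - n - 1, by omega⟩
  rw [hk'] at hk ⊢
  have hk3 : k + 1 ≤ x ^ (k * h) := by
    calc k + 1 ≤ x ^ k := Nat.lt_pow_self (by omega)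
      _ ≤ x ^ (k * h) := Nat.pow_le_pow_right (by omega) (by nlinarith)
  calc q ^ A ≤ q ^ (v + padicValNat q n) := Nat.pow_le_pow_right (by omega) hAle
    _ = q ^ v * q ^ padicValNat q n := pow_add _ _ _
    _ ≤ x ^ h * x ^ (k * h) := Nat.mul_le_mul hqv (hk.trans hk3)
    _ = (x ^ (k + 1)) ^ h := by ring

lemma sum_inv_le_harmonic (J : Finset ℕ) (hJ : ∀ j ∈ J, 1 ≤ j) :
    ∑ j ∈ J, (1 : ℝ) / j ≤ (harmonic J.card : ℝ) := by
  induction J using Finset.induction_on_max with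
  | empty => simp
  | insert a s ha ih =>
    have hna : a ∉ s := fun h => (ha a h).false
    rw [Finset.sum_insert hna, Finset.card_insert_of_notMem hna, harmonic_succ]
    have h1 := ih (fun j hj => hJ j (Finset.mem_insert_of_mem hj))
    have h2 : s.card + 1 ≤ a := by
      have : s ⊆ Finset.Ico 1 a := fun j hj => Finset.mem_Ico.2
        ⟨hJ j (Finset.mem_insert_of_mem hj), ha j hj⟩
      have := Finset.card_le_card this
      have := hJ a (Finset.mem_insert_self _ _)
      simp at *; omega
    have h3 : (1 : ℝ) / a ≤ ((s.card + 1 : ℕ) : ℝ)⁻¹ := by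
      rw [one_div]
      apply inv_anti₀ (by positivity)
      exact_mod_cast h2
    push_cast at h3 ⊢
    linarith

lemma sum_Pq {q : ℕ} (hq : 0 < q) (P : Finset ℕ) (hP : ∀ p ∈ P, 2 ≤ p ∧ 2 * q ∣ p - 1) :
    ∑ p ∈ P, (1 : ℝ) / (p - 1) ≤ (harmonic P.card : ℝ) / (2 * q) := by
  set f : ℕ → ℕ := fun p => (p - 1) / (2 * q) with hf
  have hfe : ∀ p ∈ P, p = 2 * q * f p + 1 := by
    intro p hp
    obtain ⟨h1, h2⟩ := hP p hp
    have := Nat.mul_div_cancel' h2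
    simp only [hf]; omega
  have hinj : Set.InjOn f P := by
    intro a ha b hb hab
    rw [hfe a ha, hfe b hb, hab]
  have h1 := sum_inv_le_harmonic (P.image f) (by
    intro j hj
    obtain ⟨p, hp, rfl⟩ := Finset.mem_image.1 hj
    have h1 := hfe p hp
    have := (hP p hp).1
    rcases Nat.eq_zero_or_pos (f p) with h0 | h0
    · rw [h0] at h1; omega
    · exact h0)
  rw [Finset.sum_image hinj, Finset.card_image_of_injOn hinj] at h1
  have hq' : (0 : ℝ) < 2 * q := by positivity
  rw [le_div_iff₀ hq', Finset.sum_mul]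
  refine le_trans (le_of_eq (Finset.sum_congr rfl fun p hp => ?_)) h1
  have e : (p : ℝ) = 2 * q * f p + 1 := by exact_mod_cast hfe p hp
  rw [e]
  have : (f p : ℝ) ≠ 0 := by
    intro h0
    have := (hP p hp).1
    have h00 : f p = 0 := by exact_mod_cast h0
    have := hfe p hp
    rw [h00] at this; omega
  have : (q : ℝ) ≠ 0 := by positivity
  field_simp
  ring

lemma real_ineq {u : ℝ} (hu : 1 ≤ u) :
    (1 + Real.log u / Real.log 2) * (1 + Real.log u) ≤ 2 * u := by
  set t := Real.log u with ht
  have ht0 : 0 ≤ t := Real.log_nonneg hu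
  have hu' : u = Real.exp t := (Real.exp_log (by linarith)).symm
  have h2 : t / Real.log 2 ≤ 1.4428 * t := by
    have := Real.log_two_gt_d9
    rw [div_le_iff₀ (by linarith)]
    nlinarith
  have h3 : 1 + t + t ^ 2 / 2 + t ^ 3 / 6 + t ^ 4 / 24 ≤ Real.exp t := by
    have := Real.sum_le_exp_of_nonneg ht0 5
    simp [Finset.sum_range_succ, Nat.factorial] at this
    linarith
  have h4 : (1 + t / Real.log 2) * (1 + t) ≤ (1 + 1.4428 * t) * (1 + t) := by gcongr
  rw [hu']
  have h5 : 0 ≤ t ^ 3 := by positivity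
  nlinarith [sq_nonneg (t - 1), sq_nonneg (t ^ 2 - 1), sq_nonneg (t ^ 2 - t), mul_nonneg ht0 (sq_nonneg (t - 1)), mul_nonneg ht0 (sq_nonneg (t - 1.2)), sq_nonneg (t ^ 2 - 1.4)]

lemma P_empty {q x y m n p : ℕ} (hq : q.Prime) (hxy : y < x) (hc : x.Coprime y)
    (hx2 : ¬ 2 ∣ x) (hy2 : ¬ 2 ∣ y) (hm : 0 < m) (hn : 0 < n)
    (hdvd : Nat.totient (qq x y m) ∣ qq x y n) (hv : padicValNat q n < padicValNat q m)
    (hqN : q ∣ qq x y m) (hp : p.Prime) (hpN : p ∣ qq x y m) (hqp : q ∣ p - 1) : False := by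
  have := Fact.mk hq
  have h1 := totient_val (N := qq x y m) hq {p} (by
    intro r hr; rw [Finset.mem_singleton.1 hr]; exact ⟨hp, hpN, hqp⟩)
  rw [Finset.card_singleton] at h1
  have h2 := h1.trans hdvd
  have h3 : q ∣ qq x y n := (dvd_pow_self q (by omega)).trans h2
  have h4 := val_lemma hq hxy hc hx2 hy2 hm hn hqN h3
  have h5 := (padicValNat_dvd_iff_le (p := q) (qq_pos hxy hn).ne').1 h2
  omega

lemma cover {x y m n p : ℕ} (hxy : y < x) (hc : x.Coprime y)
    (hx2 : ¬ 2 ∣ x) (hy2 : ¬ 2 ∣ y) (hnm : n < m) (hn : 0 < n)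
    (hdvd : Nat.totient (qq x y m) ∣ qq x y n)
    (hp : p.Prime) (hpN : p ∣ qq x y m) (hpk : ¬ p ∣ x ^ (m - n) - y ^ (m - n)) :
    ∃ q, q.Prime ∧ q ∣ m ∧ padicValNat q n < padicValNat q m ∧ ¬ q ∣ qq x y m ∧ q ∣ p - 1 := by
  have := Fact.mk hp
  have hm : 0 < m := by omega
  have hpd := dvd_of_dvd_qq hpN
  have hpx := not_dvd_left hp hxy hc hm hpd
  have hpy := not_dvd_right hp hxy hc hm hpd
  rw [dvd_iff_pow hxy hpy, ← orderOf_dvd_iff_pow_eq_one] at hpd hpk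
  set z := orderOf ((x : ZMod p) / y) with hz
  have hzp : z ∣ p - 1 := by
    apply orderOf_dvd_of_pow_eq_one
    apply ZMod.pow_card_sub_one_eq_one
    apply div_ne_zero <;> rwa [Ne, ZMod.natCast_eq_zero_iff]
  have hzn : ¬ z ∣ n := fun h => hpk (Nat.dvd_sub hpd h)
  have hz0 : z ≠ 0 := by
    intro h0; rw [h0] at hpd
    have := Nat.eq_zero_of_zero_dvd hpd; omega
  rw [← Nat.factorization_prime_le_iff_dvd hz0 hn.ne'] at hzn
  push Not at hzn
  obtain ⟨q, hq, hlt⟩ := hzn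
  have hle := (Nat.factorization_prime_le_iff_dvd hz0 hm.ne').2 hpd q hq
  rw [Nat.factorization_def _ hq, Nat.factorization_def _ hq] at hlt hle
  have hqz : q ∣ z := dvd_of_one_le_padicValNat (by omega)
  have hv : padicValNat q n < padicValNat q m := by omega
  exact ⟨q, hq, hqz.trans hpd, hv,
    fun h => P_empty hq hxy hc hx2 hy2 hm hn hdvd hv h hp hpN (hqz.trans hzp), hqz.trans hzp⟩

lemma card_bound {x y m q₀ : ℕ} (hy : 0 < y) (hxy : y < x) (hc : x.Coprime y) (hm : 0 < m)
    (B : Finset ℕ) (hB : ∀ q ∈ B, q.Prime ∧ q ∣ m ∧ ¬ q ∣ qq x y m) (h0 : q₀ ∈ B) :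
    2 ^ (B.card - 1) ≤ ((qq x y m).primeFactors.filter (fun p => q₀ ∣ p - 1)).card := by
  rw [← Finset.card_erase_of_mem h0, ← Finset.card_powerset]
  have hmem : ∀ E ∈ (B.erase q₀).powerset, ∀ q, q.Prime → q ∣ q₀ * ∏ r ∈ E, r → q = q₀ ∨ q ∈ E := by
    intro E hE q hq hqe
    rw [Finset.mem_powerset] at hE
    rcases hq.dvd_mul.1 hqe with h | h
    · exact Or.inl ((Nat.prime_dvd_prime_iff_eq hq (hB _ h0).1).1 h)
    · obtain ⟨r, hr, hqr⟩ := (Prime.dvd_finsetProd_iff hq.prime _).1 h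
      right
      rwa [(Nat.prime_dvd_prime_iff_eq hq (hB _ (Finset.mem_of_mem_erase (hE hr))).1).1 hqr]
  have key : ∀ E ∈ (B.erase q₀).powerset, ∃ p, p.Prime ∧ p ∣ qq x y m ∧
      (q₀ * ∏ r ∈ E, r) ∣ p - 1 ∧ ∀ r, p ∣ x ^ r - y ^ r ↔ (q₀ * ∏ r ∈ E, r) ∣ r := by
    intro E hE
    have hE' := Finset.mem_powerset.1 hE
    have hq0E : q₀ ∉ E := fun h => Finset.notMem_erase q₀ B (hE' h)
    have hem : q₀ * ∏ r ∈ E, r ∣ m := by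
      rw [← Finset.prod_insert (f := fun r => r) hq0E]
      have hsub : ∀ q ∈ insert q₀ E, q ∈ B := by
        intro q hq
        rcases Finset.mem_insert.1 hq with rfl | h
        · exact h0
        · exact Finset.mem_of_mem_erase (hE' h)
      apply Finset.prod_primes_dvd
      · intro q hq; exact (hB q (hsub q hq)).1.prime
      · intro q hq; exact (hB q (hsub q hq)).2.1
    have hpos : 0 < q₀ * ∏ r ∈ E, r := Nat.pos_of_dvd_of_pos hem hm
    have h2 : 2 ≤ q₀ * ∏ r ∈ E, r :=
      (hB q₀ h0).1.two_le.trans (Nat.le_of_dvd hpos (dvd_mul_right _ _))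
    obtain ⟨p, hp, hpq, hp1, hiff⟩ := zsig hy hxy hc h2 (by
      intro p hp hpq hpe
      have hpN := hpq.trans (qq_dvd hxy hem)
      rcases hmem E hE p hp hpe with rfl | h
      · exact (hB _ h0).2.2 hpN
      · exact (hB _ (Finset.mem_of_mem_erase (hE' h))).2.2 hpN)
    exact ⟨p, hp, hpq.trans (qq_dvd hxy hem), hp1, hiff⟩
  choose! f hf using key
  apply Finset.card_le_card_of_injOn f
  · intro E hE
    obtain ⟨h1, h2, h3, -⟩ := hf E hE
    simp only [Finset.coe_filter, Set.mem_ofPred_eq, Nat.mem_primeFactors]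
    exact ⟨⟨h1, h2, (qq_pos hxy hm).ne'⟩, (dvd_mul_right _ _).trans h3⟩
  · intro E hE E' hE' hEE
    have h1 := (hf E hE).2.2.2
    have h2 := (hf E' hE').2.2.2
    rw [hEE] at h1
    have hee : q₀ * ∏ r ∈ E, r = q₀ * ∏ r ∈ E', r :=
      Nat.dvd_antisymm ((h1 _).1 ((h2 _).2 dvd_rfl)) ((h2 _).1 ((h1 _).2 dvd_rfl))
    have sub : ∀ F ∈ (B.erase q₀).powerset, ∀ F' ∈ (B.erase q₀).powerset,
        q₀ * ∏ r ∈ F, r = q₀ * ∏ r ∈ F', r → F ⊆ F' := by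
      intro F hF F' hF' h q hq
      have hqB := Finset.mem_powerset.1 hF hq
      have hd : q ∣ q₀ * ∏ r ∈ F', r := by
        rw [← h]; exact (Finset.dvd_prod_of_mem _ hq).mul_left _
      exact (hmem F' hF' q (hB q (Finset.mem_of_mem_erase hqB)).1 hd).resolve_left
        (Finset.ne_of_mem_erase hqB)
    exact Finset.Subset.antisymm (sub E hE E' hE' hee) (sub E' hE' E hE hee.symm)

lemma S1_aux (S : Finset ℕ) (hS : ∀ p ∈ S, p.Prime ∧ p ≠ 2) :
    (∏ p ∈ S, ((p : ℝ) / (p - 1))) ^ 2 ≤ ((∏ p ∈ S, p : ℕ) : ℝ) := by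
  rw [← Finset.prod_pow]
  push_cast
  apply Finset.prod_le_prod
  · intro p hp; positivity
  · intro p hp
    obtain ⟨h1, h2⟩ := hS p hp
    have h3 : 3 ≤ p := by have := h1.two_le; omega
    have h4 : (3 : ℝ) ≤ p := by exact_mod_cast h3
    rw [div_pow, div_le_iff₀ (by nlinarith)]
    nlinarith

lemma S1_bound {D : ℕ} (hD : 0 < D) (S : Finset ℕ) (hS : ∀ p ∈ S, p.Prime ∧ p ∣ D)
    (h2 : 2 ∈ S → 4 ∣ D) :
    (∏ p ∈ S, ((p : ℝ) / (p - 1))) ^ 2 ≤ D := by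
  by_cases h : 2 ∈ S
  · have hT : ∀ p ∈ S.erase 2, p.Prime ∧ p ≠ 2 := fun p hp =>
      ⟨(hS p (Finset.mem_of_mem_erase hp)).1, Finset.ne_of_mem_erase hp⟩
    rw [← Finset.mul_prod_erase S _ h]
    have h3 := S1_aux _ hT
    have hcop : Nat.Coprime 4 (∏ p ∈ S.erase 2, p) := by
      apply Nat.Coprime.prod_right
      intro p hp
      have : Nat.Coprime (2 ^ 2) p := Nat.Coprime.pow_left _
        ((Nat.coprime_primes Nat.prime_two (hT p hp).1).2 (hT p hp).2.symm)
      simpa using this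
    have h4 : 4 * ∏ p ∈ S.erase 2, p ∣ D := by
      apply hcop.mul_dvd_of_dvd_of_dvd (h2 h)
      apply Finset.prod_primes_dvd
      · intro p hp; exact (hT p hp).1.prime
      · intro p hp; exact (hS p (Finset.mem_of_mem_erase hp)).2
    have h5 : (4 : ℝ) * ((∏ p ∈ S.erase 2, p : ℕ) : ℝ) ≤ D := by
      exact_mod_cast Nat.le_of_dvd hD h4
    rw [mul_pow]
    norm_num at h3 h5 ⊢
    linarith
  · refine (S1_aux S fun p hp => ⟨(hS p hp).1, by rintro rfl; exact h hp⟩).trans ?_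
    have h4 : ∏ p ∈ S, p ∣ D := by
      apply Finset.prod_primes_dvd
      · intro p hp; exact (hS p hp).1.prime
      · intro p hp; exact (hS p hp).2
    exact_mod_cast Nat.le_of_dvd hD h4

lemma S2_bound {L : ℝ} (hL : 1 ≤ L) (B : Finset ℕ) (P : ℕ → Finset ℕ) (S : Finset ℕ)
    (hB3 : ∀ q ∈ B, 3 ≤ q)
    (hA : ∀ q ∈ B, ((P q).card : ℝ) ≤ q * L / 2)
    (hcard : ∀ q ∈ B, 2 ^ (B.card - 1) ≤ (P q).card)
    (hP : ∀ q ∈ B, ∀ p ∈ P q, 2 ≤ p ∧ 2 * q ∣ p - 1)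
    (hS : ∀ p ∈ S, ∃ q ∈ B, p ∈ P q) :
    ∑ p ∈ S, (1 : ℝ) / (p - 1) ≤ L / 2 := by
  have h1 : ∑ p ∈ S, (1 : ℝ) / (p - 1) ≤ ∑ q ∈ B, ∑ p ∈ P q, (1 : ℝ) / (p - 1) := by
    rw [Finset.sum_sigma']
    have hpos : ∀ s ∈ B.sigma P, (0 : ℝ) ≤ 1 / ((s.2 : ℝ) - 1) := by
      intro s hs
      rw [Finset.mem_sigma] at hs
      have := (hP _ hs.1 _ hs.2).1
      have : (2 : ℝ) ≤ s.2 := by exact_mod_cast this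
      apply div_nonneg <;> linarith
    choose! g hg using hS
    have e : ∑ p ∈ S, (1 : ℝ) / (p - 1) =
        ∑ s ∈ S.image (fun p => (⟨g p, p⟩ : (_ : ℕ) × ℕ)), (1 : ℝ) / ((s.2 : ℝ) - 1) := by
      rw [Finset.sum_image]
      intro a _ b _ hab
      simp at hab; exact hab.2
    rw [e]
    apply Finset.sum_le_sum_of_subset_of_nonneg
    · intro s hs
      obtain ⟨p, hp, rfl⟩ := Finset.mem_image.1 hs
      exact Finset.mem_sigma.2 (hg p hp)
    · intro s hs _; exact hpos s hs
  refine h1.trans ?_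
  rcases B.eq_empty_or_nonempty with rfl | hne
  · simp; linarith
  set q₀ := B.min' hne with hq0
  have h0 : q₀ ∈ B := B.min'_mem hne
  have hq03 : (3 : ℝ) ≤ q₀ := by exact_mod_cast hB3 _ h0
  set u : ℝ := q₀ * L / 2 with hu
  have hu1 : 1 ≤ u := by rw [hu]; nlinarith
  have hterm : ∀ q ∈ B, ∑ p ∈ P q, (1 : ℝ) / (p - 1) ≤ (1 + Real.log u) / (2 * q₀) := by
    intro q hq
    have hq3 : (3 : ℝ) ≤ q := by exact_mod_cast hB3 _ hq
    have hqq : (q₀ : ℝ) ≤ q := by exact_mod_cast B.min'_le q hq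
    have a1 := sum_Pq (by have := hB3 q hq; omega) (P q) (hP q hq)
    have a2 := harmonic_le_one_add_log (P q).card
    have hAp : (0 : ℝ) < (P q).card := by
      have := hcard q hq
      have h2 : 0 < 2 ^ (B.card - 1) := by positivity
      exact_mod_cast h2.trans_le this
    have a3 := Real.log_le_log hAp (hA q hq)
    have hm := Real.log_div_self_antitoneOn (a := Real.exp 1 * u) (b := Real.exp 1 * (q * L / 2))
      (by simp only [Set.mem_Ici]; have := Real.exp_pos 1; nlinarith)
      (by simp only [Set.mem_Ici]
          have := Real.exp_pos 1
          have h1 : 1 ≤ q * L / 2 := by nlinarith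
          nlinarith)
      (by rw [hu]; gcongr)
    have hqL : (0 : ℝ) < q * L / 2 := by positivity
    simp only at hm
    rw [Real.log_mul (Real.exp_pos 1).ne' hqL.ne', Real.log_mul (Real.exp_pos 1).ne' (by linarith),
      Real.log_exp, div_le_div_iff₀ (by positivity) (by positivity)] at hm
    have hm2 : (1 + Real.log (q * L / 2)) * q₀ ≤ (1 + Real.log u) * q := by
      have hc : 0 < Real.exp 1 * L / 2 := by positivity
      apply le_of_mul_le_mul_right _ hc
      calc _ = (1 + Real.log (q * L / 2)) * (Real.exp 1 * u) := by rw [hu]; ring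
        _ ≤ _ := hm
        _ = _ := by ring
    calc _ ≤ (harmonic (P q).card : ℝ) / (2 * q) := a1
      _ ≤ (1 + Real.log (q * L / 2)) / (2 * q) := by gcongr; linarith
      _ ≤ (1 + Real.log u) / (2 * q₀) := by
        rw [div_le_div_iff₀ (by positivity) (by positivity)]
        linarith
  have hs : (B.card : ℝ) ≤ 1 + Real.log u / Real.log 2 := by
    have hc := hcard q₀ h0
    have h2 : ((2 : ℝ) ^ (B.card - 1)) ≤ u := le_trans (by exact_mod_cast hc) (hA q₀ h0)
    have h3 := Real.log_le_log (by positivity) h2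
    rw [Real.log_pow] at h3
    have h4 : ((B.card - 1 : ℕ) : ℝ) ≤ Real.log u / Real.log 2 := by
      rwa [le_div_iff₀ (Real.log_pos (by norm_num))]
    have h5 : (B.card : ℝ) = ((B.card - 1 : ℕ) : ℝ) + 1 := by
      have : B.card = (B.card - 1) + 1 := by have := hne.card_pos; omega
      exact_mod_cast this
    linarith
  have hlog := Real.log_nonneg hu1
  calc _ ≤ ∑ q ∈ B, (1 + Real.log u) / (2 * q₀) := Finset.sum_le_sum hterm
    _ = B.card * ((1 + Real.log u) / (2 * q₀)) := by simp
    _ ≤ (1 + Real.log u / Real.log 2) * ((1 + Real.log u) / (2 * q₀)) := by gcongr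
    _ = (1 + Real.log u / Real.log 2) * (1 + Real.log u) / (2 * q₀) := by ring
    _ ≤ 2 * u / (2 * q₀) := div_le_div_of_nonneg_right (real_ineq hu1) (by positivity)
    _ = L / 2 := by rw [hu]; field_simp

lemma core {x y m n : ℕ} (hy : 0 < y) (hxy : y < x) (hc : x.Coprime y) (hn : 0 < n) (hnm : n < m)
    (hdvd : Nat.totient (qq x y m) ∣ qq x y n)
    (hbig : x ^ (m - n) * Nat.totient (qq x y m) < qq x y m) : False := by
  have hm : 0 < m := by omega
  have hN0 := qq_pos hxy hm
  have hxk : x ≤ x ^ (m - n) := Nat.le_self_pow (by omega) x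
  have hphi : 0 < Nat.totient (qq x y m) := Nat.totient_pos.2 hN0
  have hN2 : 2 < qq x y m := by nlinarith
  have h2n : 2 ∣ qq x y n := (even_iff_two_dvd.1 (Nat.totient_even hN2)).trans hdvd
  have hx2 := not_dvd_left Nat.prime_two hxy hc hn (dvd_of_dvd_qq h2n)
  have hy2 := not_dvd_right Nat.prime_two hxy hc hn (dvd_of_dvd_qq h2n)
  have hd2 : 2 ∣ x - y := by omega
  have hneven : 2 ∣ n := (dvd_qq_iff Nat.prime_two hxy hy2 hd2).1 h2n
  have hx3 : 3 ≤ x := by omega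
  set N := qq x y m with hN
  set k := m - n with hk
  have hX3 : 3 ≤ x ^ k := hx3.trans hxk
  set L := Real.log ((x ^ k : ℕ) : ℝ) with hL
  have hX3' : (3 : ℝ) ≤ ((x ^ k : ℕ) : ℝ) := by exact_mod_cast hX3
  have hexp : Real.exp 1 < 3 := Real.exp_one_lt_three
  have hL1 : 1 ≤ L := by
    rw [hL, Real.le_log_iff_exp_le (by linarith)]; linarith
  set B := m.primeFactors.filter (fun q => padicValNat q n < padicValNat q m ∧ ¬ q ∣ N) with hB
  have hBspec : ∀ q ∈ B, q.Prime ∧ q ∣ m ∧ padicValNat q n < padicValNat q m ∧ ¬ q ∣ N := by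
    intro q hq
    rw [hB, Finset.mem_filter, Nat.mem_primeFactors] at hq
    tauto
  have hBodd : ∀ q ∈ B, Odd q ∧ 3 ≤ q := by
    intro q hq
    obtain ⟨h1, h2, h3, h4⟩ := hBspec q hq
    rcases h1.eq_two_or_odd' with rfl | h
    · exact absurd ((dvd_qq_iff Nat.prime_two hxy hy2 hd2).2 h2) h4
    · refine ⟨h, ?_⟩
      have := h1.two_le
      rcases h with ⟨t, ht⟩; omega
  set P : ℕ → Finset ℕ := fun q => N.primeFactors.filter (fun p => q ∣ p - 1) with hP
  have hPspec : ∀ q, ∀ p ∈ P q, p.Prime ∧ p ∣ N ∧ q ∣ p - 1 := by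
    intro q p hp
    rw [hP, Finset.mem_filter, Nat.mem_primeFactors] at hp
    tauto
  set S₁ := N.primeFactors.filter (fun p => p ∣ x ^ k - y ^ k) with hS1
  set S₂ := N.primeFactors.filter (fun p => ¬ p ∣ x ^ k - y ^ k) with hS2
  have hlt : y ^ k < x ^ k := Nat.pow_lt_pow_left hxy (by omega)
  have hb1 : (∏ p ∈ S₁, ((p : ℝ) / (p - 1))) ^ 2 ≤ ((x ^ k - y ^ k : ℕ) : ℝ) := by
    apply S1_bound (by omega)
    · intro p hp
      rw [hS1, Finset.mem_filter, Nat.mem_primeFactors] at hp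
      exact ⟨hp.1.1, hp.2⟩
    · intro h
      rw [hS1, Finset.mem_filter, Nat.mem_primeFactors] at h
      have h2m : 2 ∣ m := (dvd_qq_iff Nat.prime_two hxy hy2 hd2).1 h.1.2.1
      have h2k : 2 ∣ k := Nat.dvd_sub h2m hneven
      have h4 : 4 ∣ x ^ 2 - y ^ 2 := by
        rw [Nat.sq_sub_sq]
        exact mul_dvd_mul (a := 2) (c := 2) (by omega) hd2
      obtain ⟨c, hc'⟩ := h2k
      rw [hc', pow_mul, pow_mul]
      exact h4.trans (Nat.sub_dvd_pow_sub_pow _ _ _)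
  have hb2 : ∑ p ∈ S₂, (1 : ℝ) / (p - 1) ≤ L / 2 := by
    apply S2_bound hL1 B P S₂ (fun q hq => (hBodd q hq).2)
    · intro q hq
      obtain ⟨h1, h2, h3, h4⟩ := hBspec q hq
      have t := totient_val h1 (P q) (hPspec q)
      have t2 : q ^ (P q).card ∣ x ^ n - y ^ n := by
        refine (pow_dvd_pow q (Nat.le_add_left _ _)).trans (t.trans (hdvd.trans ?_))
        rw [← qq_spec]; exact dvd_mul_left _ _
      have t3 := A_bound h1 (hBodd q hq).1 hxy hc hx2 hy2 hx3 hn hnm h3 t2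
      have t4 : ((q : ℝ)) ^ (P q).card ≤ ((x ^ k : ℕ) : ℝ) ^ ((q - 1) / 2) := by exact_mod_cast t3
      have hq3 : (3 : ℝ) ≤ q := by exact_mod_cast (hBodd q hq).2
      have t5 := Real.log_le_log (by positivity) t4
      rw [Real.log_pow, Real.log_pow] at t5
      have hlq : 1 ≤ Real.log q := by
        rw [Real.le_log_iff_exp_le (by linarith)]; linarith
      have t6 : (((q - 1) / 2 : ℕ) : ℝ) ≤ q / 2 := by
        have : 2 * ((q - 1) / 2) ≤ q := by omega
        have : (2 : ℝ) * (((q - 1) / 2 : ℕ) : ℝ) ≤ q := by exact_mod_cast this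
        linarith
      have t7 : (0 : ℝ) ≤ (P q).card := by positivity
      calc ((P q).card : ℝ) ≤ (P q).card * Real.log q := by nlinarith
        _ ≤ _ := t5
        _ ≤ q / 2 * L := by gcongr
        _ = _ := by ring
    · intro q hq
      exact card_bound hy hxy hc hm B (fun r hr => ⟨(hBspec r hr).1, (hBspec r hr).2.1,
        (hBspec r hr).2.2.2⟩) hq
    · intro q hq p hp
      obtain ⟨h1, h2, h3⟩ := hPspec q p hp
      refine ⟨h1.two_le, ?_⟩
      have hq3 := (hBodd q hq).2
      have hp2 := h1.two_le
      have := Nat.le_of_dvd (by omega) h3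
      have hpodd : 2 ∣ p - 1 := by
        rcases h1.eq_two_or_odd' with rfl | ⟨t, ht⟩ <;> omega
      have hcop : Nat.Coprime 2 q := by
        rw [Nat.coprime_primes Nat.prime_two (hBspec q hq).1]; omega
      exact hcop.mul_dvd_of_dvd_of_dvd hpodd h3
    · intro p hp
      rw [hS2, Finset.mem_filter, Nat.mem_primeFactors] at hp
      obtain ⟨q, h1, h2, h3, h4, h5⟩ := cover hxy hc hx2 hy2 hnm hn hdvd hp.1.1 hp.1.2.1 hp.2
      refine ⟨q, ?_, ?_⟩
      · rw [hB, Finset.mem_filter, Nat.mem_primeFactors]; exact ⟨⟨h1, h2, hm.ne'⟩, h3, h4⟩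
      · simp only [hP, Finset.mem_filter, Nat.mem_primeFactors]; exact ⟨hp.1, h5⟩
  have hp1 : ∀ p ∈ N.primeFactors, (0 : ℝ) < (p : ℝ) - 1 := by
    intro p hp
    have := (Nat.prime_of_mem_primeFactors hp).two_le
    have : (2 : ℝ) ≤ p := by exact_mod_cast this
    linarith
  have hp0 : ∀ p ∈ N.primeFactors, (0 : ℝ) < (p : ℝ) / (p - 1) := by
    intro p hp
    have := hp1 p hp
    apply div_pos <;> linarith
  have hT : (N : ℝ) = Nat.totient N * ∏ p ∈ N.primeFactors, ((p : ℝ) / (p - 1)) := by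
    have h := Nat.totient_mul_prod_primeFactors N
    have h' : (Nat.totient N : ℝ) * ∏ p ∈ N.primeFactors, (p : ℝ) =
        N * ∏ p ∈ N.primeFactors, ((p : ℝ) - 1) := by
      have e : ∏ p ∈ N.primeFactors, ((p : ℝ) - 1) = ((∏ p ∈ N.primeFactors, (p - 1) : ℕ) : ℝ) := by
        push_cast
        apply Finset.prod_congr rfl
        intro p hp
        rw [Nat.cast_sub (Nat.prime_of_mem_primeFactors hp).one_le]; simp
      have h3 := congrArg (Nat.cast : ℕ → ℝ) h
      rw [Nat.cast_mul, Nat.cast_mul, Nat.cast_prod (fun p => p)] at h3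
      rw [e]; exact h3
    rw [Finset.prod_div_distrib, ← mul_div_assoc, h', mul_div_assoc, div_self, mul_one]
    exact (Finset.prod_pos hp1).ne'
  have hbig' : ((x ^ k : ℕ) : ℝ) < ∏ p ∈ N.primeFactors, ((p : ℝ) / (p - 1)) := by
    have h1 : ((x ^ k : ℕ) : ℝ) * Nat.totient N < N := by exact_mod_cast hbig
    rw [hT, mul_comm] at h1
    have h2 : (0 : ℝ) < Nat.totient N := by exact_mod_cast hphi
    rw [mul_lt_mul_iff_right₀ h2] at h1
    convert h1 using 1
  have hsplit : ∏ p ∈ N.primeFactors, ((p : ℝ) / (p - 1)) =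
      (∏ p ∈ S₁, ((p : ℝ) / (p - 1))) * ∏ p ∈ S₂, ((p : ℝ) / (p - 1)) :=
    (Finset.prod_filter_mul_prod_filter_not _ _ _).symm
  have hS2sub : S₂ ⊆ N.primeFactors := Finset.filter_subset _ _
  have hS1sub : S₁ ⊆ N.primeFactors := Finset.filter_subset _ _
  have hl1 : Real.log (∏ p ∈ S₁, ((p : ℝ) / (p - 1))) ≤ L / 2 := by
    have hpos : 0 < ∏ p ∈ S₁, ((p : ℝ) / (p - 1)) := Finset.prod_pos fun p hp => hp0 p (hS1sub hp)
    have h1 : (∏ p ∈ S₁, ((p : ℝ) / (p - 1))) ^ 2 ≤ ((x ^ k : ℕ) : ℝ) :=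
      hb1.trans (by exact_mod_cast Nat.sub_le _ _)
    have h2 := Real.log_le_log (by positivity) h1
    rw [Real.log_pow] at h2
    push_cast at h2
    rw [hL]; push_cast; linarith
  have hl2 : Real.log (∏ p ∈ S₂, ((p : ℝ) / (p - 1))) ≤ L / 2 := by
    refine le_trans ?_ hb2
    rw [Real.log_prod (fun p hp => (hp0 p (hS2sub hp)).ne')]
    apply Finset.sum_le_sum
    intro p hp
    have h1 := Real.log_le_sub_one_of_pos (hp0 p (hS2sub hp))
    have h2 := hp1 p (hS2sub hp)
    have h3 : (p : ℝ) / (p - 1) - 1 = 1 / (p - 1) := by field_simp; ring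
    linarith
  have hfin := Real.log_lt_log (by linarith) hbig'
  rw [hsplit, Real.log_mul (Finset.prod_pos fun p hp => hp0 p (hS1sub hp)).ne'
    (Finset.prod_pos fun p hp => hp0 p (hS2sub hp)).ne'] at hfin
  linarith

lemma qq_ratio {x y m n : ℕ} (hy : 0 < y) (hxy : y < x) (hnm : n < m) :
    x ^ (m - n) * qq x y n < qq x y m := by
  have h1 := qq_spec x y m
  have h2 := qq_spec x y n
  have h0 : 0 < x - y := by omega
  apply Nat.lt_of_mul_lt_mul_left (a := x - y)
  rw [h1]
  have e : (x - y) * (x ^ (m - n) * qq x y n) = x ^ m - x ^ (m - n) * y ^ n := by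
    calc _ = x ^ (m - n) * ((x - y) * qq x y n) := by ring
      _ = _ := by rw [h2, Nat.mul_sub, ← pow_add, Nat.sub_add_cancel hnm.le]
  rw [e]
  have h3 : y ^ m < x ^ (m - n) * y ^ n := by
    calc y ^ m = y ^ (m - n) * y ^ n := by rw [← pow_add, Nat.sub_add_cancel hnm.le]
      _ < _ := Nat.mul_lt_mul_of_pos_right (Nat.pow_lt_pow_left hxy (by omega)) (by positivity)
  have h4 : y ^ m < x ^ m := Nat.pow_lt_pow_left hxy (by omega)
  omega

lemma qq_scale {g a b m : ℕ} (hg : 0 < g) (hab : b < a) (hm : 0 < m) :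
    qq (g * a) (g * b) m = g ^ (m - 1) * qq a b m := by
  have h1 := qq_spec (g * a) (g * b) m
  have h2 := qq_spec a b m
  have h0 : 0 < a - b := by omega
  have h00 : 0 < g * (a - b) := by positivity
  apply Nat.eq_of_mul_eq_mul_left h00
  rw [Nat.mul_sub, h1, mul_pow, mul_pow, ← Nat.mul_sub, ← h2, ← Nat.mul_sub]
  obtain ⟨k, rfl⟩ : ∃ k, m = k + 1 := ⟨m - 1, by omega⟩
  simp only [Nat.add_sub_cancel]
  ring

lemma totient_pow_mul {g M : ℕ} (hg : 0 < g) (j : ℕ) :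
    Nat.totient (g ^ (j + 1) * M) = g ^ j * Nat.totient (g * M) := by
  induction j with
  | zero => simp
  | succ j ih =>
    have h := Nat.totient_gcd_mul_totient_mul g (g ^ (j + 1) * M)
    have hgcd : Nat.gcd g (g ^ (j + 1) * M) = g :=
      Nat.gcd_eq_left ((dvd_pow_self g (by omega)).mul_right _)
    rw [hgcd, ih] at h
    have hp : 0 < Nat.totient g := Nat.totient_pos.2 hg
    apply Nat.eq_of_mul_eq_mul_left hp
    rw [pow_succ' g (j + 1), mul_assoc, h]
    ring

theorem phi_eq_quotient (x y m n : ℕ) (hx : 0 < x) (hy : 0 < y)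
    (hm : 0 < m) (hn : 0 < n) (hxy : y < x)
    (heq : Nat.totient ((x ^ m - y ^ m) / (x - y)) = (x ^ n - y ^ n) / (x - y)) :
    m = 1 ∧ n = 1 := by
  change Nat.totient (qq x y m) = qq x y n at heq
  have hq1 : qq x y 1 = 1 := by
    unfold qq; rw [pow_one, pow_one]; exact Nat.div_self (by omega)
  have hmono : ∀ i j, i < j → qq x y i < qq x y j := by
    intro i j hij
    have h1 := qq_ratio hy hxy hij
    have h2 : 0 < x ^ (j - i) := by positivity
    nlinarith
  rcases Nat.lt_or_ge 1 m with hm1 | hm1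
  swap
  · have hm1' : m = 1 := by omega
    subst hm1'
    refine ⟨rfl, ?_⟩
    by_contra hne
    have := hmono 1 n (by omega)
    rw [hq1, Nat.totient_one] at heq
    omega
  exfalso
  have hN1 := hmono 1 m hm1
  rw [hq1] at hN1
  have hlt := Nat.totient_lt _ hN1
  have hnm : n < m := by
    by_contra hcon
    rcases (Nat.not_lt.1 hcon).eq_or_lt with h | h
    · rw [h] at hlt heq; omega
    · have := hmono m n h; omega
  obtain ⟨g, a, b, hg, hcop, hxa, hyb⟩ : ∃ g a b, 0 < g ∧ Nat.Coprime a b ∧ x = g * a ∧ y = g * b := by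
    have hg : 0 < Nat.gcd x y := Nat.gcd_pos_of_pos_left _ hx
    exact ⟨Nat.gcd x y, x / Nat.gcd x y, y / Nat.gcd x y, hg, Nat.coprime_div_gcd_div_gcd hg,
      (Nat.mul_div_cancel' (Nat.gcd_dvd_left _ _)).symm,
      (Nat.mul_div_cancel' (Nat.gcd_dvd_right _ _)).symm⟩
  subst hxa hyb
  have hab : b < a := Nat.lt_of_mul_lt_mul_left hxy
  have hb : 0 < b := Nat.pos_of_mul_pos_left hy
  rw [qq_scale hg hab hm, qq_scale hg hab hn] at heq
  have e1 : m - 1 = (m - 2) + 1 := by omega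
  have e2 : m - 2 = (n - 1) + (m - n - 1) := by omega
  rw [e1, totient_pow_mul hg, e2, pow_add, mul_assoc] at heq
  have heq2 := Nat.eq_of_mul_eq_mul_left (by positivity) heq
  have hdvd : Nat.totient (qq a b m) ∣ qq a b n := by
    rw [← heq2]
    exact (Nat.totient_dvd_of_dvd (dvd_mul_left _ _)).mul_left _
  have hle := Nat.le_of_dvd (qq_pos hab hn) hdvd
  exact core hb hab hcop hn hnm hdvd
    ((Nat.mul_le_mul_left _ hle).trans_lt (qq_ratio hb hab hnm))
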